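/- Let m, n ≥ 1 be integers and let GL(n) denote the group of invertible n×n complex matrices, topologized as a subspace of M_n. There exists a continuous spectrum-shrinking map φ : GL(n) → M_m if and only if n divides m; and when n divides m, every continuous spectrum-shrinking map φ : GL(n) → M_m satisfies k_{φ(X)} = (k_X)^{m/n} for all X ∈ GL(n) (in particular, sp(φ(X)) = sp(X) for all X). -/

import Mathlib

open Matrix

open Polynomial

/-!
On the matrices with distinct eigenvalues `d i`, the characteristic polynomial of `φ X` is a product
of powers of the `x - d i`. Write `X = P * diagonal d * P⁻¹`: the multiplicities are a locally
constant function of the eigenframe `(P, d)`, and eigenframes form a connected space, because the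
complement of a complex hypersurface is connected. Exchanging two labels of an eigenframe does not
change `X`, so all multiplicities are equal to one constant `k`, and `k_{φ(X)} = (k_X)^k` holds for
every `X` with distinct eigenvalues, hence for every `X` by density. Comparing degrees gives
`m = k * n`. Conversely, if `m = n * k`, then `X ↦ X ⊗ 1` preserves spectra.
-/

section PolynomialOnLines

variable {R M N : Type*} [CommRing R] [AddCommGroup M] [Module R M] [AddCommGroup N] [Module R N]

/-- `f` restricts to a polynomial function of the parameter on every affine line of `M`. On a
finite-dimensional complex space this includes every polynomial function, and it is all that
the topological arguments about the locus `f ≠ 0` need. -/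
def IsPolynomialOnLines (f : M → R) : Prop :=
  ∀ x v : M, ∃ p : R[X], ∀ t : R, p.eval t = f (x + t • v)

namespace IsPolynomialOnLines

variable {f g : M → R}

lemma mul (hf : IsPolynomialOnLines f) (hg : IsPolynomialOnLines g) :
    IsPolynomialOnLines fun x ↦ f x * g x := fun x v ↦ by
  obtain ⟨p, hp⟩ := hf x v
  obtain ⟨q, hq⟩ := hg x v
  exact ⟨p * q, fun t ↦ by rw [eval_mul, hp, hq]⟩

lemma comp_linearMap (hf : IsPolynomialOnLines f) (L : N →ₗ[R] M) :
    IsPolynomialOnLines fun x ↦ f (L x) := fun x v ↦ by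
  simpa only [map_add, map_smul] using hf (L x) (L v)

lemma finite_setOf_eq_zero [IsDomain R] (hf : IsPolynomialOnLines f) {x v : M} {t₀ : R}
    (h : f (x + t₀ • v) ≠ 0) : {t : R | f (x + t • v) = 0}.Finite := by
  obtain ⟨p, hp⟩ := hf x v
  have hp₀ : p ≠ 0 := by
    rintro rfl
    exact h (by rw [← hp, eval_zero])
  refine (finite_setOfPred_isRoot hp₀).subset fun t ht ↦ ?_
  exact (hp t).trans ht

variable {E : Type*} [AddCommGroup E] [Module ℂ E] [TopologicalSpace E] [ContinuousAdd E]
  [ContinuousSMul ℂ E] {f : E → ℂ}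

-- Two points of the locus lie on a complex line, and that line meets the zero set in a finite set,
-- which does not disconnect `ℂ`.
theorem isPreconnected_setOf_ne_zero (hf : IsPolynomialOnLines f) :
    IsPreconnected {x | f x ≠ 0} := by
  refine isPreconnected_of_forall_pair fun x hx y hy ↦ ?_
  let line : ℂ → E := fun t ↦ x + t • (y - x)
  have hline₀ : line 0 = x := by simp [line]
  have hline₁ : line 1 = y := by simp [line]
  have hfin : {t | f (line t) = 0}.Finite :=
    hf.finite_setOf_eq_zero (t₀ := 0) (by rwa [← hline₀] at hx)
  refine ⟨line '' {t | f (line t) = 0}ᶜ, ?_, ⟨0, ?_, hline₀⟩, ⟨1, ?_, hline₁⟩, ?_⟩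
  · rintro _ ⟨t, ht, rfl⟩
    exact ht
  · simpa [hline₀] using hx
  · simpa [hline₁] using hy
  · exact (hfin.countable.isConnected_compl_of_one_lt_rank (by simp)).isPreconnected.image line
      (by fun_prop)

theorem dense_setOf_ne_zero (hf : IsPolynomialOnLines f) {x₀ : E} (hx₀ : f x₀ ≠ 0) :
    Dense {x | f x ≠ 0} := fun x ↦ by
  let line : ℂ → E := fun t ↦ x + t • (x₀ - x)
  have hfin : {t | f (line t) = 0}.Finite :=
    hf.finite_setOf_eq_zero (t₀ := 1) (by simpa using hx₀)
  have hcl : line 0 ∈ closure (line '' {t | f (line t) = 0}ᶜ) :=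
    mem_closure_image (by fun_prop : Continuous line).continuousAt
      (hfin.countable.dense_compl ℂ 0)
  refine closure_mono ?_ (by simpa [line] using hcl)
  rintro _ ⟨t, ht, rfl⟩
  exact ht

end IsPolynomialOnLines

end PolynomialOnLines

section MatrixFunctions

variable {ι R K : Type*} [CommRing R] [Field K]

lemma map_evalRingHom_C_add_X_smul (A B : Matrix ι ι R) (t : R) :
    (A.map C + (X : R[X]) • B.map C).map (evalRingHom t) = A + t • B := by
  ext i j
  simp [mul_comm t]

lemma exists_isUnit_injective [Finite ι] [CharZero K] :
    ∃ d : ι → K, IsUnit d ∧ Function.Injective d := by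
  obtain ⟨n, ⟨e⟩⟩ := Finite.exists_equiv_fin ι
  refine ⟨fun i ↦ ((e i : ℕ) : K) + 1, Pi.isUnit_iff.2 fun i ↦ ?_, fun i j h ↦ ?_⟩
  · exact (Nat.cast_add_one_ne_zero _).isUnit
  · simpa [Fin.val_inj] using h

variable [Fintype ι] [DecidableEq ι]

lemma isPolynomialOnLines_det :
    IsPolynomialOnLines fun A : Matrix ι ι R ↦ A.det := fun A B ↦
  ⟨(A.map C + (X : R[X]) • B.map C).det, fun t ↦ by
    rw [← coe_evalRingHom, RingHom.map_det, RingHom.mapMatrix_apply, map_evalRingHom_C_add_X_smul]⟩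

lemma isPolynomialOnLines_resultant_charpoly_derivative (m n : ℕ) :
    IsPolynomialOnLines fun A : Matrix ι ι R ↦
      A.charpoly.resultant (derivative A.charpoly) m n := fun A B ↦
  let L := A.map C + (X : R[X]) • B.map C
  ⟨L.charpoly.resultant (derivative L.charpoly) m n, fun t ↦ by
    rw [← coe_evalRingHom, ← resultant_map_map, ← derivative_map, ← charpoly_map,
      map_evalRingHom_C_add_X_smul]⟩

lemma resultant_derivative_ne_zero_iff_separable [CharZero K] {p : K[X]} (hp : p ≠ 0) :
    p.resultant (derivative p) p.natDegree (p.natDegree - 1) ≠ 0 ↔ p.Separable := by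
  have h := resultant_eq_zero_iff (f := p) (g := derivative p)
  rw [natDegree_derivative] at h
  simp [h, hp, Polynomial.Separable]

/-- The determinant times the discriminant of the characteristic polynomial: its nonvanishing locus
consists of the invertible matrices with distinct eigenvalues. The discriminant enters, up to sign,
as the resultant with the derivative; the degrees are prescribed because the resultant commutes with
ring homomorphisms only for fixed degrees. -/
noncomputable def detMulDiscr (A : Matrix ι ι R) : R :=
  A.det * A.charpoly.resultant (derivative A.charpoly) (Fintype.card ι) (Fintype.card ι - 1)

lemma isPolynomialOnLines_detMulDiscr :
    IsPolynomialOnLines (detMulDiscr : Matrix ι ι R → R) :=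
  isPolynomialOnLines_det.mul (isPolynomialOnLines_resultant_charpoly_derivative _ _)

lemma detMulDiscr_ne_zero_iff [CharZero K] {A : Matrix ι ι K} :
    detMulDiscr A ≠ 0 ↔ IsUnit A ∧ A.charpoly.Separable := by
  rw [← resultant_derivative_ne_zero_iff_separable A.charpoly_monic.ne_zero,
    charpoly_natDegree_eq_dim, isUnit_iff_isUnit_det, isUnit_iff_ne_zero, detMulDiscr,
    mul_ne_zero_iff]

lemma detMulDiscr_diagonal_ne_zero_iff [CharZero K] {d : ι → K} :
    detMulDiscr (diagonal d) ≠ 0 ↔ IsUnit d ∧ Function.Injective d := by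
  rw [detMulDiscr_ne_zero_iff, isUnit_diagonal, charpoly_diagonal,
    separable_prod_X_sub_C_iff]

theorem dense_setOf_separable_charpoly : Dense {A : Matrix ι ι ℂ | A.charpoly.Separable} := by
  obtain ⟨d, hd⟩ := exists_isUnit_injective (ι := ι) (K := ℂ)
  refine (isPolynomialOnLines_detMulDiscr.dense_setOf_ne_zero
    (detMulDiscr_diagonal_ne_zero_iff.2 hd)).mono fun A hA ↦ ?_
  exact (detMulDiscr_ne_zero_iff.1 hA).2

theorem isOpen_setOf_isUnit_matrix : IsOpen {A : Matrix ι ι ℂ | IsUnit A} := by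
  simpa only [isUnit_iff_isUnit_det, isUnit_iff_ne_zero] using
    isOpen_ne_fun (by fun_prop) continuous_const

theorem isPreconnected_setOf_isUnit_matrix : IsPreconnected {P : Matrix ι ι ℂ | IsUnit P} := by
  simpa only [isUnit_iff_isUnit_det, isUnit_iff_ne_zero] using
    (isPolynomialOnLines_det (ι := ι) (R := ℂ)).isPreconnected_setOf_ne_zero

end MatrixFunctions

theorem isPreconnected_setOf_isUnit_and_injective {ι : Type*} [Finite ι] :
    IsPreconnected {d : ι → ℂ | IsUnit d ∧ Function.Injective d} := by
  classical
  cases nonempty_fintype ι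
  have h := (isPolynomialOnLines_detMulDiscr.comp_linearMap
    (diagonalLinearMap ι ℂ ℂ)).isPreconnected_setOf_ne_zero
  change IsPreconnected {d : ι → ℂ | detMulDiscr (diagonal d) ≠ 0} at h
  simpa only [detMulDiscr_diagonal_ne_zero_iff] using h

section Multiplicities

lemma isLocallyConstant_of_finite_range_of_isClosed_fiber {Y Z : Type*} [TopologicalSpace Y]
    {f : Y → Z} (hf : (Set.range f).Finite) (hc : ∀ z, IsClosed (f ⁻¹' {z})) :
    IsLocallyConstant f := by
  refine IsLocallyConstant.iff_isOpen_fiber.2 fun z ↦ ?_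
  have hcompl : (f ⁻¹' {z})ᶜ = ⋃ w ∈ Set.range f \ {z}, f ⁻¹' {w} := by ext; simp
  rw [← isClosed_compl_iff, hcompl]
  exact hf.sdiff.isClosed_biUnion fun w _ ↦ hc w

variable {ι κ K : Type*} [Fintype κ] [DecidableEq κ] [Field K]

lemma rootMultiplicity_prod_X_sub_C_pow [Fintype ι] {d : ι → K} (hd : Function.Injective d)
    (k : ι → ℕ) (i : ι) : (∏ j, (X - C (d j)) ^ k j).rootMultiplicity (d i) = k i := by
  classical
  have hne : ∏ j, (X - C (d j)) ^ k j ≠ 0 :=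
    Finset.prod_ne_zero_iff.2 fun j _ ↦ pow_ne_zero _ (X_sub_C_ne_zero _)
  simp [← count_roots, roots_prod _ _ hne, Multiset.count_bind, Multiset.count_singleton,
    hd.eq_iff]

lemma eq_prod_X_sub_C_pow_of_splits [Fintype ι] {p : K[X]} (hp : p.Splits) (hm : p.Monic)
    {d : ι → K} (hd : Function.Injective d) (hroots : ∀ a, p.IsRoot a → a ∈ Set.range d) :
    p = ∏ i, (X - C (d i)) ^ p.rootMultiplicity (d i) := by
  classical
  have hsub : p.roots.toFinset ⊆ Finset.univ.image d := fun a ha ↦ by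
    simpa using hroots a (isRoot_of_mem_roots (Multiset.mem_toFinset.1 ha))
  calc
    p = (p.roots.map (X - C ·)).prod := hp.eq_prod_roots_of_monic hm
    _ = ∏ a ∈ p.roots.toFinset, (X - C a) ^ p.rootMultiplicity a :=
      prod_multiset_root_eq_finset_root
    _ = ∏ a ∈ Finset.univ.image d, (X - C a) ^ p.rootMultiplicity a := by
      refine Finset.prod_subset hsub fun a _ ha ↦ ?_
      rw [← count_roots, Multiset.count_eq_zero.2 (by simpa using ha), pow_zero]
    _ = ∏ i, (X - C (d i)) ^ p.rootMultiplicity (d i) := Finset.prod_image hd.injOn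

lemma charpoly_eq_prod_of_spectrum_subset_range [Fintype ι] [IsAlgClosed K] {B : Matrix κ κ K}
    {d : ι → K} (hd : Function.Injective d) (hs : spectrum K B ⊆ Set.range d) :
    B.charpoly = ∏ i, (X - C (d i)) ^ B.charpoly.rootMultiplicity (d i) :=
  eq_prod_X_sub_C_pow_of_splits (IsAlgClosed.splits _) B.charpoly_monic hd fun _ ha ↦
    hs (mem_spectrum_of_isRoot_charpoly ha)

lemma rootMultiplicity_charpoly_le_card (B : Matrix κ κ K) (a : K) :
    B.charpoly.rootMultiplicity a ≤ Fintype.card κ := by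
  classical
  rw [← count_roots, ← B.charpoly_natDegree_eq_dim]
  exact (Multiset.count_le_card _ _).trans (card_roots' _)

lemma continuous_eval_charpoly {R : Type*} [CommRing R] [TopologicalSpace R] [IsTopologicalRing R]
    (x : R) : Continuous fun B : Matrix κ κ R ↦ B.charpoly.eval x := by
  simp only [eval_charpoly]
  fun_prop

variable {Y : Type*} [TopologicalSpace Y] [Finite ι] [IsAlgClosed K] [TopologicalSpace K]
  [IsTopologicalRing K] [T2Space K]

-- For a fixed vector of multiplicities `k`, having `k` as multiplicities is the closed condition
-- `charpoly = ∏ (X - d i) ^ k i`, and only finitely many `k` occur.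
theorem isLocallyConstant_rootMultiplicity_charpoly {B : Y → Matrix κ κ K} {d : Y → ι → K}
    (hB : Continuous B) (hd : Continuous d) (hinj : ∀ y, Function.Injective (d y))
    (hs : ∀ y, spectrum K (B y) ⊆ Set.range (d y)) :
    IsLocallyConstant fun y i ↦ (B y).charpoly.rootMultiplicity (d y i) := by
  cases nonempty_fintype ι
  have : Infinite K := IsAlgClosed.instInfinite
  refine isLocallyConstant_of_finite_range_of_isClosed_fiber ?_ fun k ↦ ?_
  · refine (Set.Finite.pi' fun _ ↦ Set.finite_Iic (Fintype.card κ)).subset ?_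
    rintro _ ⟨y, rfl⟩ i
    exact rootMultiplicity_charpoly_le_card _ _
  have hpoly (y) : (B y).charpoly = ∏ i, (X - C (d y i)) ^ k i ↔
      ∀ x, (B y).charpoly.eval x = ∏ i, (x - d y i) ^ k i := by
    have heval (x) : (∏ i, (X - C (d y i)) ^ k i).eval x = ∏ i, (x - d y i) ^ k i := by
      simp [eval_prod]
    exact ⟨fun h x ↦ by rw [h, heval], fun h ↦ Polynomial.funext fun x ↦ by rw [h, heval]⟩
  have hfiber (y) : (fun i ↦ (B y).charpoly.rootMultiplicity (d y i)) = k ↔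
      ∀ x, (B y).charpoly.eval x = ∏ i, (x - d y i) ^ k i := by
    rw [← hpoly]
    constructor
    · rintro rfl
      exact charpoly_eq_prod_of_spectrum_subset_range (hinj y) (hs y)
    · intro h
      ext i
      rw [h, rootMultiplicity_prod_X_sub_C_pow (hinj y)]
  simp only [Set.preimage, Set.mem_singleton_iff, hfiber, Set.ofPred_forall]
  refine isClosed_iInter fun x ↦ isClosed_eq ((continuous_eval_charpoly x).comp hB) ?_
  fun_prop

end Multiplicities

section Eigenframes

variable {ι : Type*} [Fintype ι] [DecidableEq ι] {K : Type*} [Field K]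

lemma exists_eigenbasis_of_injective {A : Matrix ι ι K} {d : ι → K} (hd : Function.Injective d)
    (hmem : ∀ i, d i ∈ spectrum K A) : ∃ P, IsUnit P ∧ A = P * diagonal d * P⁻¹ := by
  have heig : ∀ i, ∃ v, Module.End.HasEigenvector (toLin' A) (d i) v := fun i ↦ by
    have := hmem i
    rw [← spectrum_toLin', ← Module.End.hasEigenvalue_iff_mem_spectrum] at this
    exact this.exists_hasEigenvector
  choose v hv using heig
  let P : Matrix ι ι K := of fun i j ↦ v j i
  have hP : IsUnit P := linearIndependent_cols_iff_isUnit.1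
    (Module.End.eigenvectors_linearIndependent' _ d hd v hv)
  have hAP : A * P = P * diagonal d := by
    ext i j
    have := congrFun (hv j).apply_eq_smul i
    rw [toLin'_apply, Pi.smul_apply, smul_eq_mul, mul_comm] at this
    rw [mul_diagonal]
    exact this
  refine ⟨P, hP, ?_⟩
  rw [← hAP, mul_nonsing_inv_cancel_right _ _ ((isUnit_iff_isUnit_det _).1 hP)]

lemma exists_injective_forall_mem_spectrum [IsAlgClosed K] {A : Matrix ι ι K}
    (hA : A.charpoly.Separable) :
    ∃ d : ι → K, Function.Injective d ∧ ∀ i, d i ∈ spectrum K A := by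
  classical
  have hcard : Fintype.card ι = Fintype.card A.charpoly.roots.toFinset := by
    rw [Fintype.card_coe, Multiset.toFinset_card_of_nodup (nodup_roots hA),
      ← (IsAlgClosed.splits A.charpoly).natDegree_eq_card_roots, charpoly_natDegree_eq_dim]
  refine ⟨fun i ↦ Fintype.equivOfCardEq hcard i,
    Subtype.val_injective.comp (Equiv.injective _), fun i ↦ ?_⟩
  exact mem_spectrum_of_isRoot_charpoly
    (isRoot_of_mem_roots (Multiset.mem_toFinset.1 (Fintype.equivOfCardEq hcard i).2))

lemma submatrix_mul_diagonal_mul_inv (P : Matrix ι ι K) (d : ι → K) (σ : Equiv.Perm ι) :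
    P.submatrix id σ * diagonal (d ∘ σ) * (P.submatrix id σ)⁻¹ = P * diagonal d * P⁻¹ := by
  have hinv : (P.submatrix id σ)⁻¹ = P⁻¹.submatrix σ id := inv_submatrix_equiv P (.refl ι) σ
  rw [hinv, ← submatrix_diagonal_equiv, submatrix_mul_equiv, submatrix_mul_equiv, submatrix_id_id]

variable (ι) in
/-- A labelled diagonalization of an invertible complex matrix with distinct eigenvalues: a pair
`(P, d)` of an invertible matrix of eigenvectors and a family of distinct nonzero eigenvalues. It
is a subtype of a product so as to inherit the topology. -/
abbrev Eigenframe : Type _ :=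
  {F : Matrix ι ι ℂ × (ι → ℂ) // F ∈ {P | IsUnit P} ×ˢ {d | IsUnit d ∧ Function.Injective d}}

namespace Eigenframe

/-- The matrix `P` of an eigenframe `(P, d)`, whose `i`-th column is the `i`-th eigenvector. -/
abbrev basisMatrix (F : Eigenframe ι) : Matrix ι ι ℂ := F.1.1

/-- The family `d` of eigenvalues of an eigenframe `(P, d)`. -/
abbrev eigenvalue (F : Eigenframe ι) : ι → ℂ := F.1.2

lemma isUnit_basisMatrix (F : Eigenframe ι) : IsUnit F.basisMatrix := F.2.1

lemma isUnit_eigenvalue (F : Eigenframe ι) : IsUnit F.eigenvalue := F.2.2.1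

lemma injective_eigenvalue (F : Eigenframe ι) : Function.Injective F.eigenvalue := F.2.2.2

instance : PreconnectedSpace (Eigenframe ι) :=
  Subtype.preconnectedSpace
    (isPreconnected_setOf_isUnit_matrix.prod isPreconnected_setOf_isUnit_and_injective)

/-- The invertible matrix `P * diagonal d * P⁻¹` diagonalized by the eigenframe `(P, d)`. -/
noncomputable def toMatrix (F : Eigenframe ι) : {X : Matrix ι ι ℂ // IsUnit X} :=
  ⟨F.basisMatrix * diagonal F.eigenvalue * F.basisMatrix⁻¹,
    (F.isUnit_basisMatrix.mul (isUnit_diagonal.2 F.isUnit_eigenvalue)).mul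
      (isUnit_nonsing_inv_iff.2 F.isUnit_basisMatrix)⟩

lemma continuous_toMatrix : Continuous (toMatrix (ι := ι)) := by
  have hinv : Continuous fun F : Eigenframe ι ↦ F.basisMatrix⁻¹ :=
    continuous_iff_continuousAt.2 fun F ↦ by
      have hdet : F.basisMatrix.det ≠ 0 :=
        ((isUnit_iff_isUnit_det _).1 F.isUnit_basisMatrix).ne_zero
      exact ContinuousAt.comp (g := Inv.inv)
        (continuousAt_matrix_inv _ (by simpa using continuousAt_inv₀ hdet)) (by fun_prop)
  exact .subtype_mk (by fun_prop) _

lemma charpoly_toMatrix (F : Eigenframe ι) :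
    F.toMatrix.1.charpoly = ∏ i, (X - C (F.eigenvalue i)) := by
  have h := charpoly_units_conj F.isUnit_basisMatrix.unit (diagonal F.eigenvalue)
  rwa [charpoly_diagonal] at h

lemma spectrum_toMatrix (F : Eigenframe ι) :
    spectrum ℂ F.toMatrix.1 = Set.range F.eigenvalue := by
  have h := spectrum.units_conjugate (R := ℂ) (a := diagonal F.eigenvalue)
    (u := F.isUnit_basisMatrix.unit)
  rwa [coe_units_inv, spectrum_diagonal] at h

lemma exists_toMatrix_eq {A : {X : Matrix ι ι ℂ // IsUnit X}} (hA : A.1.charpoly.Separable) :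
    ∃ F : Eigenframe ι, F.toMatrix = A := by
  obtain ⟨d, hd, hmem⟩ := exists_injective_forall_mem_spectrum hA
  obtain ⟨P, hP, hAP⟩ := exists_eigenbasis_of_injective hd hmem
  have hd₀ : IsUnit d := Pi.isUnit_iff.2 fun i ↦
    (spectrum.ne_zero_of_mem_of_unit (a := A.2.unit) (hmem i)).isUnit
  exact ⟨⟨(P, d), hP, hd₀, hd⟩, Subtype.ext hAP.symm⟩

/-- The relabelling of an eigenframe by a permutation of the labels: the eigenvectors and the
eigenvalues are permuted simultaneously, so the diagonalized matrix does not change. -/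
def permute (σ : Equiv.Perm ι) (F : Eigenframe ι) : Eigenframe ι :=
  ⟨(F.basisMatrix.submatrix id σ, F.eigenvalue ∘ σ),
    (isUnit_submatrix_equiv (.refl ι) σ).2 F.isUnit_basisMatrix,
    Pi.isUnit_iff.2 fun i ↦ Pi.isUnit_iff.1 F.isUnit_eigenvalue (σ i),
    F.injective_eigenvalue.comp σ.injective⟩

lemma eigenvalue_permute (σ : Equiv.Perm ι) (F : Eigenframe ι) (i : ι) :
    (F.permute σ).eigenvalue i = F.eigenvalue (σ i) :=
  rfl

lemma toMatrix_permute (σ : Equiv.Perm ι) (F : Eigenframe ι) :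
    (F.permute σ).toMatrix = F.toMatrix :=
  Subtype.ext (submatrix_mul_diagonal_mul_inv _ _ σ)

end Eigenframe

end Eigenframes

section SpectrumShrinking

variable {ι κ : Type*} [Fintype ι] [DecidableEq ι] [Fintype κ] [DecidableEq κ]

section Rigidity

variable {φ : {X : Matrix ι ι ℂ // IsUnit X} → Matrix κ κ ℂ}

lemma rootMultiplicity_charpoly_eigenframe_eq (hφ : Continuous φ)
    (hs : ∀ X, spectrum ℂ (φ X) ⊆ spectrum ℂ X.1) (F G : Eigenframe ι) (i j : ι) :
    (φ F.toMatrix).charpoly.rootMultiplicity (F.eigenvalue i) =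
      (φ G.toMatrix).charpoly.rootMultiplicity (G.eigenvalue j) := by
  have hloc := isLocallyConstant_rootMultiplicity_charpoly
    (hφ.comp Eigenframe.continuous_toMatrix) (d := Eigenframe.eigenvalue) (by fun_prop)
    Eigenframe.injective_eigenvalue fun F ↦ (hs _).trans F.spectrum_toMatrix.subset
  have hperm := congrFun (hloc.apply_eq_of_preconnectedSpace F (G.permute (Equiv.swap i j))) i
  simpa only [Function.comp_apply, Eigenframe.toMatrix_permute, Eigenframe.eigenvalue_permute,
    Equiv.swap_apply_left] using hperm

lemma exists_charpoly_eq_pow_of_separable (hφ : Continuous φ)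
    (hs : ∀ X, spectrum ℂ (φ X) ⊆ spectrum ℂ X.1) :
    ∃ k : ℕ, ∀ X, X.1.charpoly.Separable → (φ X).charpoly = X.1.charpoly ^ k := by
  obtain ⟨k, hk⟩ : ∃ k, ∀ (F : Eigenframe ι) (i : ι),
      (φ F.toMatrix).charpoly.rootMultiplicity (F.eigenvalue i) = k := by
    obtain h | ⟨F₀, i₀⟩ := isEmpty_or_nonempty (Eigenframe ι × ι)
    · exact ⟨0, fun F i ↦ (h.false (F, i)).elim⟩
    · exact ⟨_, fun F i ↦ rootMultiplicity_charpoly_eigenframe_eq hφ hs F F₀ i i₀⟩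
  refine ⟨k, fun X hX ↦ ?_⟩
  obtain ⟨F, rfl⟩ := Eigenframe.exists_toMatrix_eq hX
  rw [charpoly_eq_prod_of_spectrum_subset_range F.injective_eigenvalue
    ((hs _).trans F.spectrum_toMatrix.subset), F.charpoly_toMatrix, ← Finset.prod_pow]
  simp only [hk]

theorem exists_charpoly_eq_pow (hφ : Continuous φ)
    (hs : ∀ X, spectrum ℂ (φ X) ⊆ spectrum ℂ X.1) :
    ∃ k : ℕ, ∀ X, (φ X).charpoly = X.1.charpoly ^ k := by
  obtain ⟨k, hk⟩ := exists_charpoly_eq_pow_of_separable hφ hs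
  refine ⟨k, fun X ↦ Polynomial.funext fun x ↦ ?_⟩
  have hdense := dense_setOf_separable_charpoly.preimage
    (isOpen_setOf_isUnit_matrix (ι := ι)).isOpenMap_subtype_val
  refine congrFun (Continuous.ext_on hdense ((continuous_eval_charpoly x).comp hφ)
    (g := fun X ↦ (X.1.charpoly ^ k).eval x) ?_ fun X hX ↦ ?_) X
  · simp only [eval_pow]
    exact ((continuous_eval_charpoly x).comp continuous_subtype_val).pow k
  · exact congrArg (eval x) (hk X hX)

end Rigidity

lemma card_eq_mul_of_charpoly_eq_pow {R : Type*} [CommRing R] [Nontrivial R] {A : Matrix ι ι R}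
    {B : Matrix κ κ R} {k : ℕ} (h : B.charpoly = A.charpoly ^ k) :
    Fintype.card κ = k * Fintype.card ι := by
  rw [← B.charpoly_natDegree_eq_dim, h, A.charpoly_monic.natDegree_pow, charpoly_natDegree_eq_dim]

lemma spectrum_eq_of_charpoly_eq_pow {K : Type*} [Field K] {A : Matrix ι ι K} {B : Matrix κ κ K}
    {k : ℕ} (hk : k ≠ 0) (h : B.charpoly = A.charpoly ^ k) : spectrum K B = spectrum K A := by
  ext a
  rw [mem_spectrum_iff_isRoot_charpoly, mem_spectrum_iff_isRoot_charpoly, h, IsRoot.def, IsRoot.def,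
    eval_pow, pow_eq_zero_iff hk]

lemma nonempty_algHom_of_card_dvd (R : Type*) [CommSemiring R]
    (h : Fintype.card ι ∣ Fintype.card κ) :
    Nonempty (Matrix ι ι R →ₐ[R] Matrix κ κ R) := by
  obtain ⟨k, hk⟩ := h
  let e : ι × Fin k ≃ κ := Fintype.equivOfCardEq (by simp [hk])
  exact ⟨(reindexAlgEquiv R R e).toAlgHom.comp <|
    (kroneckerAlgEquiv ι (Fin k) R).toAlgHom.comp Algebra.TensorProduct.includeLeft⟩

theorem exists_continuous_spectrum_shrinker_of_card_dvd
    (h : Fintype.card ι ∣ Fintype.card κ) :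
    ∃ φ : Matrix ι ι ℂ → Matrix κ κ ℂ,
      Continuous φ ∧ ∀ X, spectrum ℂ (φ X) ⊆ spectrum ℂ X := by
  obtain ⟨f⟩ := nonempty_algHom_of_card_dvd ℂ h
  exact ⟨f, f.toLinearMap.continuous_of_finiteDimensional, AlgHom.spectrum_apply_subset f⟩

end SpectrumShrinking

/-- For integers `m, n ≥ 1`, there exists a continuous spectrum-shrinking
map `φ : GL(n) → M_m` iff `n ∣ m`; and when `n ∣ m`, every continuous spectrum-shrinking
`φ : GL(n) → M_m` satisfies `k_{φ(X)} = (k_X)^(m/n)` (in particular it preserves spectra). -/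
theorem exists_continuous_spectrum_shrinker_GLn_iff (n m : ℕ) (hn : 1 ≤ n) (hm : 1 ≤ m) :
    ((∃ φ : {X : Matrix (Fin n) (Fin n) ℂ // IsUnit X} → Matrix (Fin m) (Fin m) ℂ,
        Continuous φ ∧ ∀ X, spectrum ℂ (φ X) ⊆ spectrum ℂ X.val) ↔ n ∣ m) ∧
    (n ∣ m → ∀ φ : {X : Matrix (Fin n) (Fin n) ℂ // IsUnit X} → Matrix (Fin m) (Fin m) ℂ,
        Continuous φ → (∀ X, spectrum ℂ (φ X) ⊆ spectrum ℂ X.val) →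
        ∀ X, (φ X).charpoly = X.val.charpoly ^ (m / n) ∧
          spectrum ℂ (φ X) = spectrum ℂ X.val) := by
  refine ⟨⟨?_, fun hdvd ↦ ?_⟩, fun _ φ hφ hs X ↦ ?_⟩
  · rintro ⟨φ, hφ, hs⟩
    obtain ⟨k, hk⟩ := exists_charpoly_eq_pow hφ hs
    have hcard : m = k * n := by simpa using card_eq_mul_of_charpoly_eq_pow (hk ⟨1, isUnit_one⟩)
    exact Dvd.intro_left k hcard.symm
  · obtain ⟨φ, hφ, hs⟩ := exists_continuous_spectrum_shrinker_of_card_dvd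
      (ι := Fin n) (κ := Fin m) (by simpa using hdvd)
    exact ⟨fun X ↦ φ X.1, hφ.comp continuous_subtype_val, fun X ↦ hs X.1⟩
  · obtain ⟨k, hk⟩ := exists_charpoly_eq_pow hφ hs
    have hcard : m = k * n := by simpa using card_eq_mul_of_charpoly_eq_pow (hk X)
    have hk₀ : k ≠ 0 := by
      rintro rfl
      omega
    rw [Nat.div_eq_of_eq_mul_left hn hcard]
    exact ⟨hk X, spectrum_eq_of_charpoly_eq_pow hk₀ (hk X)⟩
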